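/- Let G~ be a mixed graph with underlying graph G, 0 ≤ κ(G) ≤ c(G), and r(G~) = 2m(G) − 2κ(G) + 1. Then for every vertex u lying on some even cycle of G: κ(G − u) = κ(G) − 1, m(G − u) = m(G) − 1, and r(G~ − u) = 2m(G − u) − 2κ(G − u) + a_u for some a_u ∈ {0,1}. -/

import Mathlib

open scoped Classical

namespace MixedPaper

universe u

/-- A mixed graph: a finite simple graph together with an orientation of a subset
of its edges.  `arc u v = true` means there is an arc from `u` to `v`. -/
structure MixedGraph (V : Type u) where
  graph : SimpleGraph V
  arc : V → V → Bool
  arc_adj : ∀ u v, arc u v → graph.Adj u v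
  arc_antisymm : ∀ u v, arc u v → ¬ arc v u

variable {V : Type u}

/-- The Hermitian adjacency matrix of a mixed graph. -/
noncomputable def MixedGraph.hMatrix [Fintype V] [DecidableEq V] (M : MixedGraph V) :
    Matrix V V ℂ := fun u v =>
  if M.arc u v then Complex.I
  else if M.arc v u then -Complex.I
  else if M.graph.Adj u v then 1 else 0

/-- The H-rank of a mixed graph: the rank of its Hermitian adjacency matrix. -/
noncomputable def MixedGraph.hRank [Fintype V] [DecidableEq V] (M : MixedGraph V) : ℕ :=
  M.hMatrix.rank

/-- The matching number of a simple graph. -/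
noncomputable def matchingNumber (G : SimpleGraph V) : ℕ :=
  sSup {k | ∃ N : G.Subgraph, N.IsMatching ∧ N.edgeSet.ncard = k}

/-- A subgraph is a cycle subgraph if it is connected and every one of its vertices
has exactly two neighbours in it. -/
def IsCycleSubgraph {G : SimpleGraph V} (C : G.Subgraph) : Prop :=
  C.Connected ∧ ∀ v ∈ C.verts, {w | C.Adj v w}.ncard = 2

/-- κ(G) : the number of even cycles of G. -/
noncomputable def evenCycleCount (G : SimpleGraph V) : ℕ :=
  {C : G.Subgraph | IsCycleSubgraph C ∧ Even C.verts.ncard}.ncard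

/-- c(G) = |E(G)| - |V(G)| + ω(G), the cyclomatic number. -/
noncomputable def cyclomatic [Fintype V] (G : SimpleGraph V) : ℤ :=
  (G.edgeSet.ncard : ℤ) - (Fintype.card V : ℤ) + (Nat.card G.ConnectedComponent : ℤ)

/-- The induced mixed subgraph on a set of vertices. -/
def MixedGraph.induce (M : MixedGraph V) (S : Set V) : MixedGraph S where
  graph := M.graph.induce S
  arc := fun a b => M.arc a.1 b.1
  arc_adj := fun a b h => M.arc_adj a.1 b.1 h
  arc_antisymm := fun a b h => M.arc_antisymm a.1 b.1 h

/-- The mixed subgraph induced by a connected component of the underlying graph. -/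
def MixedGraph.comp (M : MixedGraph V) (c : M.graph.ConnectedComponent) :
    MixedGraph c.supp := M.induce c.supp

/-- The signature |f - b| of a closed walk in a mixed graph: the absolute difference
between the numbers of forward and backward arcs along the walk. -/
def walkSignature (M : MixedGraph V) {u : V} (w : M.graph.Walk u u) : ℕ :=
  ((w.darts.countP fun d => M.arc d.toProd.1 d.toProd.2 : ℤ) -
    (w.darts.countP fun d => M.arc d.toProd.2 d.toProd.1 : ℤ)).natAbs

/-- The signature of the cycle subgraph `C` of the mixed graph `M` satisfies the
predicate `P` (expressed via a closed walk traversing `C`; the signature does not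
depend on the choice of traversal). -/
def CycleSig (M : MixedGraph V) (C : M.graph.Subgraph) (P : ℕ → Prop) : Prop :=
  ∃ (u : V) (w : M.graph.Walk u u), w.IsCycle ∧
    {v | v ∈ w.support} = C.verts ∧ {e | e ∈ w.edges} = C.edgeSet ∧
    P (walkSignature M w)

/-- `C` is a pendant cycle with unique vertex `x` of degree 3. -/
def IsPendantCycle (G : SimpleGraph V) (C : G.Subgraph) (x : V) : Prop :=
  IsCycleSubgraph C ∧ x ∈ C.verts ∧ {w | G.Adj x w}.ncard = 3 ∧
    ∀ v ∈ C.verts, v ≠ x → {w | G.Adj v w}.ncard = 2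

/-- G has no pendant vertices (vertices of degree 1). -/
def NoPendantVerts (G : SimpleGraph V) : Prop := ∀ u : V, {w | G.Adj u w}.ncard ≠ 1

/-- The (distinct) cycles of G are pairwise vertex-disjoint. -/
def CyclesVertexDisjoint (G : SimpleGraph V) : Prop :=
  ∀ C₁ C₂ : G.Subgraph, IsCycleSubgraph C₁ → IsCycleSubgraph C₂ → C₁ ≠ C₂ →
    Disjoint C₁.verts C₂.verts

/-- The (distinct) even cycles of G are pairwise vertex-disjoint. -/
def EvenCyclesVertexDisjoint (G : SimpleGraph V) : Prop :=
  ∀ C₁ C₂ : G.Subgraph, IsCycleSubgraph C₁ → IsCycleSubgraph C₂ →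
    Even C₁.verts.ncard → Even C₂.verts.ncard → C₁ ≠ C₂ →
    Disjoint C₁.verts C₂.verts

/-- One pendant `K₂` deletion step, recorded on the surviving vertex sets:
`u` is pendant in the graph induced on `S` with unique neighbour `v` there,
and both are deleted. -/
def PendantStep (G : SimpleGraph V) (S T : Set V) : Prop :=
  ∃ u v, u ∈ S ∧ v ∈ S ∧ {w | w ∈ S ∧ G.Adj u w} = {v} ∧ T = S \ {u, v}

/-- `S` is reachable from the full vertex set by a sequence of pendant K₂ deletions. -/
def PendantReaches (G : SimpleGraph V) (S : Set V) : Prop :=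
  Relation.ReflTransGen (PendantStep G) Set.univ S

/-- The graph induced on `S` has no pendant vertices. -/
def NoPendantIn (G : SimpleGraph V) (S : Set V) : Prop :=
  ∀ u ∈ S, {w | w ∈ S ∧ G.Adj u w}.ncard ≠ 1

/-- `u` lies on some even cycle of `G`. -/
def OnEvenCycle (G : SimpleGraph V) (u : V) : Prop :=
  ∃ C : G.Subgraph, IsCycleSubgraph C ∧ Even C.verts.ncard ∧ u ∈ C.verts

/-- G is the graph ∞(p,1,q): two cycles of lengths p and q sharing exactly one vertex. -/
def IsInfinityGraph (G : SimpleGraph V) (p q : ℕ) : Prop :=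
  ∃ C₁ C₂ : G.Subgraph, IsCycleSubgraph C₁ ∧ IsCycleSubgraph C₂ ∧
    C₁.verts.ncard = p ∧ C₂.verts.ncard = q ∧
    (C₁.verts ∩ C₂.verts).ncard = 1 ∧ C₁ ⊔ C₂ = ⊤

/-- G is the theta graph θ(p,l,q): three internally disjoint paths with p, l, q
vertices respectively, joining two common endvertices. -/
def IsThetaGraph (G : SimpleGraph V) (p l q : ℕ) : Prop :=
  2 ≤ p ∧ 2 ≤ l ∧ 2 ≤ q ∧ ¬(p = 2 ∧ l = 2) ∧ ¬(p = 2 ∧ q = 2) ∧ ¬(l = 2 ∧ q = 2) ∧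
  ∃ (a b : V) (W₁ W₂ W₃ : G.Walk a b), W₁.IsPath ∧ W₂.IsPath ∧ W₃.IsPath ∧
    W₁.length = p - 1 ∧ W₂.length = l - 1 ∧ W₃.length = q - 1 ∧
    (∀ v : V, v ∈ W₁.support ∨ v ∈ W₂.support ∨ v ∈ W₃.support) ∧
    (∀ e ∈ G.edgeSet, e ∈ W₁.edges ∨ e ∈ W₂.edges ∨ e ∈ W₃.edges) ∧
    {v | v ∈ W₁.support ∧ v ∈ W₂.support} = {a, b} ∧
    {v | v ∈ W₁.support ∧ v ∈ W₃.support} = {a, b} ∧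
    {v | v ∈ W₂.support ∧ v ∈ W₃.support} = {a, b}

/-- Every odd cycle of `M` has signature satisfying `P`. -/
def OddCyclesSig (M : MixedGraph V) (P : ℕ → Prop) : Prop :=
  ∀ C : M.graph.Subgraph, IsCycleSubgraph C → Odd C.verts.ncard → CycleSig M C P

/-- Every even cycle of `M`, of length `n`, has signature `s` satisfying `P n s`. -/
def EvenCyclesSig (M : MixedGraph V) (P : ℕ → ℕ → Prop) : Prop :=
  ∀ C : M.graph.Subgraph, IsCycleSubgraph C → Even C.verts.ncard →
    CycleSig M C (P C.verts.ncard)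

/-- The whole mixed graph is a single cycle. -/
def IsCycleMG (M : MixedGraph V) : Prop := IsCycleSubgraph (⊤ : M.graph.Subgraph)

/-- The family 𝔊₀. -/
def MemG0 [Fintype V] [DecidableEq V] (M : MixedGraph V) : Prop :=
  M.graph.Connected ∧ 1 ≤ cyclomatic M.graph ∧ CyclesVertexDisjoint M.graph ∧
  NoPendantVerts M.graph ∧
  ∃ (C : M.graph.Subgraph) (x : V), IsPendantCycle M.graph C x ∧ Odd C.verts.ncard ∧
    CycleSig M C Odd ∧
    ((M.induce (C.vertsᶜ ∪ {x})).hRank : ℤ) =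
      2 * (matchingNumber (M.induce (C.vertsᶜ ∪ {x})).graph : ℤ) -
        2 * cyclomatic (M.induce (C.vertsᶜ ∪ {x})).graph

/-- The family 𝔛₁ : mixed ∞(p,1,q)-graphs, p even, q odd, whose odd cycle has odd
signature and whose even cycle C̃_p satisfies σ ≡ p (mod 4). -/
def MemX1 (M : MixedGraph V) : Prop :=
  ∃ p q : ℕ, Even p ∧ Odd q ∧ IsInfinityGraph M.graph p q ∧
    OddCyclesSig M Odd ∧ EvenCyclesSig M (fun n s => s % 4 = n % 4)

/-- The family 𝔛₂ : mixed θ(p,l,q)-graphs, p even, l q odd, whose two odd cycles have odd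
signatures and whose even cycle C̃_{q+l-2} satisfies q + l + σ ≡ 2 (mod 4). -/
def MemX2 (M : MixedGraph V) : Prop :=
  ∃ p l q : ℕ, Even p ∧ Odd l ∧ Odd q ∧ IsThetaGraph M.graph p l q ∧
    OddCyclesSig M Odd ∧ EvenCyclesSig M (fun _ s => (q + l + s) % 4 = 2)

/-- The family 𝔊₂ = 𝔊₀ ∪ 𝔛₁ ∪ 𝔛₂ together with the mixed odd cycles of odd signature. -/
def MemG2 [Fintype V] [DecidableEq V] (M : MixedGraph V) : Prop :=
  MemG0 M ∨ MemX1 M ∨ MemX2 M ∨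
    (IsCycleMG M ∧ Odd (Nat.card V) ∧ CycleSig M ⊤ Odd)

/-- The family 𝔜₁. -/
def MemY1 (M : MixedGraph V) : Prop :=
  ∃ p q : ℕ, Even p ∧ Odd q ∧ IsInfinityGraph M.graph p q ∧
    OddCyclesSig M Even ∧ EvenCyclesSig M (fun n s => s % 4 = n % 4)

/-- The family 𝔜₂. -/
def MemY2 (M : MixedGraph V) : Prop :=
  ∃ p l q : ℕ, Even p ∧ Odd l ∧ Odd q ∧ IsThetaGraph M.graph p l q ∧
    OddCyclesSig M Even ∧ EvenCyclesSig M (fun _ s => (q + l + s) % 4 = 2)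

/-- `M` is a disjoint union of `k` even cycles and one odd cycle with even signature. -/
def IsDisjointUnionEvenCyclesOddCycleEvenSig (M : MixedGraph V) (k : ℤ) : Prop :=
  (∀ c : M.graph.ConnectedComponent, IsCycleMG (M.comp c)) ∧
  (({c : M.graph.ConnectedComponent | Even (Nat.card c.supp)}.ncard : ℤ) = k) ∧
  (∃! c : M.graph.ConnectedComponent, Odd (Nat.card c.supp)) ∧
  (∀ c : M.graph.ConnectedComponent, Odd (Nat.card c.supp) →
    CycleSig (M.comp c) ⊤ Even)

/-- The family 𝔉₀. -/
def MemF0 [Fintype V] [DecidableEq V] (M : MixedGraph V) : Prop :=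
  M.graph.Connected ∧ 2 ≤ cyclomatic M.graph ∧ CyclesVertexDisjoint M.graph ∧
  NoPendantVerts M.graph ∧
  (∃ (C₀ : M.graph.Subgraph) (x₀ : V), IsPendantCycle M.graph C₀ x₀ ∧ Odd C₀.verts.ncard ∧
    CycleSig M C₀ Even ∧
    ∀ C : M.graph.Subgraph, IsCycleSubgraph C → C ≠ C₀ →
      Even C.verts.ncard ∧ CycleSig M C (fun s => s % 4 = C.verts.ncard % 4)) ∧
  (∃ (Cq : M.graph.Subgraph) (x : V), IsPendantCycle M.graph Cq x ∧ Even Cq.verts.ncard ∧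
    ∃ S : Set ↥(Cq.vertsᶜ ∪ {x}),
      PendantReaches (M.induce (Cq.vertsᶜ ∪ {x})).graph S ∧
      NoPendantIn (M.induce (Cq.vertsᶜ ∪ {x})).graph S ∧
      IsDisjointUnionEvenCyclesOddCycleEvenSig
        ((M.induce (Cq.vertsᶜ ∪ {x})).induce S)
        (cyclomatic (M.induce (Cq.vertsᶜ ∪ {x})).graph))

/-- The family 𝔉₂ = 𝔉₀ ∪ 𝔜₁ ∪ 𝔜₂ together with the mixed odd cycles of even signature. -/
def MemF2 [Fintype V] [DecidableEq V] (M : MixedGraph V) : Prop :=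
  MemF0 M ∨ MemY1 M ∨ MemY2 M ∨
    (IsCycleMG M ∧ Odd (Nat.card V) ∧ CycleSig M ⊤ Even)

/-- A connected component that is either an even cycle C̃_q with σ ≡ q (mod 4),
or an isolated vertex. -/
def GoodOtherComp (M : MixedGraph V) : Prop :=
  (IsCycleMG M ∧ Even (Nat.card V) ∧
    CycleSig M ⊤ (fun s => s % 4 = (Nat.card V) % 4)) ∨
  Nat.card V = 1

/-- A fractional matching of `G`, given as a weight function on `Sym2 V` vanishing
outside the edge set. -/
def IsFracMatching [Fintype V] [DecidableEq V] (G : SimpleGraph V) (f : Sym2 V → ℝ) : Prop :=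
  (∀ e ∈ G.edgeSet, 0 ≤ f e ∧ f e ≤ 1) ∧ (∀ e, e ∉ G.edgeSet → f e = 0) ∧
    ∀ v : V, ∑ e ∈ Finset.univ.filter (fun e : Sym2 V => v ∈ e), f e ≤ 1

/-- The fractional matching number m*(G). -/
noncomputable def fracMatchingNumber [Fintype V] [DecidableEq V] (G : SimpleGraph V) : ℝ :=
  sSup {x : ℝ | ∃ f : Sym2 V → ℝ, IsFracMatching G f ∧ ∑ e : Sym2 V, f e = x}

/-- Membership in the family ℱ : fractional matchings of total weight m*(G) taking
values in {0, 1/2, 1}. -/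
def InOptFamily [Fintype V] [DecidableEq V] (G : SimpleGraph V) (f : Sym2 V → ℝ) : Prop :=
  IsFracMatching G f ∧ (∑ e : Sym2 V, f e) = fracMatchingNumber G ∧
    ∀ e : Sym2 V, f e = 0 ∨ f e = 1 / 2 ∨ f e = 1

/-- An optimal fractional matching: a member of ℱ with the largest number of
edges of weight 1. -/
def IsOptFracMatching [Fintype V] [DecidableEq V] (G : SimpleGraph V) (f : Sym2 V → ℝ) : Prop :=
  InOptFamily G f ∧
    ∀ g : Sym2 V → ℝ, InOptFamily G g →
      {e : Sym2 V | g e = 1}.ncard ≤ {e : Sym2 V | f e = 1}.ncard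

/-- E₁(C) : the edges of `G` with exactly one endpoint on the cycle `C`. -/
def cutEdges (G : SimpleGraph V) (C : G.Subgraph) : Set (Sym2 V) :=
  {e | e ∈ G.edgeSet ∧ ∃ a b : V, e = s(a, b) ∧ a ∈ C.verts ∧ b ∉ C.verts}

/-!
The engine is the bound `2m(G) ≤ r(G̃) + 2κ(G)`, valid for every mixed graph. If `G` has no even
cycle, let `S` be the set of vertices covered by a maximum matching. The Gaussian-integer matrix
`H(G̃[S])` reduces modulo the prime `1 + i` to the adjacency matrix of `G[S]` over `ZMod 2`, whose
determinant counts the perfect matchings of `G[S]`. There is exactly one: two different perfect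
matchings would have an even cycle in their symmetric difference. Hence `H(G̃[S])` is invertible and
`r(G̃) ≥ |S| = 2m(G)`. Otherwise delete a vertex of an even cycle: the rank does not increase, `κ`
drops by at least one and `m` by at most one.

When the bound holds for `G̃` with slack at most one, the bound for `G̃ - u` forces both of these
inequalities for `κ` and `m` to be equalities.
-/

section Matchings

open SimpleGraph Subgraph

lemma ncard_verts_of_isMatching [Finite V] {G : SimpleGraph V} {N : G.Subgraph}
    (hN : N.IsMatching) : N.verts.ncard = 2 * N.edgeSet.ncard := by
  have := Fintype.ofFinite V
  have hdeg (v : N.verts) [Fintype (N.coe.neighborSet v)] : N.coe.degree v = 1 := by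
    obtain ⟨w, hvw, huniq⟩ := hN v.2
    exact degree_eq_one_iff_existsUnique_adj.2
      ⟨⟨w, hvw.snd_mem⟩, hvw, fun x hvx => Subtype.ext (huniq x hvx)⟩
  have hedges : N.edgeSet.ncard = N.coe.edgeFinset.card := by
    rw [← N.image_coe_edgeSet_coe, ← N.coe.coe_edgeFinset,
      Set.ncard_image_of_injective _ (Sym2.map.injective Subtype.val_injective),
      Set.ncard_coe_finset]
  rw [hedges, ← N.coe.sum_degrees_eq_twice_card_edges]
  simp only [hdeg, Finset.sum_const, smul_eq_mul, mul_one, Finset.card_univ,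
    ← Nat.card_eq_fintype_card, Nat.card_coe_set_eq]

lemma bddAbove_ncard_edgeSet_isMatching [Finite V] (G : SimpleGraph V) :
    BddAbove {k | ∃ N : G.Subgraph, N.IsMatching ∧ N.edgeSet.ncard = k} := by
  refine ⟨G.edgeSet.ncard, ?_⟩
  rintro _ ⟨N, -, rfl⟩
  exact Set.ncard_le_ncard N.edgeSet_subset

lemma ncard_edgeSet_le_matchingNumber [Finite V] {G : SimpleGraph V} {N : G.Subgraph}
    (hN : N.IsMatching) : N.edgeSet.ncard ≤ matchingNumber G :=
  le_csSup (bddAbove_ncard_edgeSet_isMatching G) ⟨N, hN, rfl⟩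

lemma exists_isMatching_ncard_edgeSet_eq_matchingNumber [Finite V] (G : SimpleGraph V) :
    ∃ N : G.Subgraph, N.IsMatching ∧ N.edgeSet.ncard = matchingNumber G :=
  Nat.sSup_mem (s := {k | ∃ N : G.Subgraph, N.IsMatching ∧ N.edgeSet.ncard = k})
    ⟨0, ⊥, fun _ hv => hv.elim, by simp⟩ (bddAbove_ncard_edgeSet_isMatching G)

/-- The restriction of a matching `N` to the edges with both ends in `S`, as a matching of the
induced graph `G[S]`. Vertices whose partner lies outside `S` are dropped, so this is not
`N.comap`. -/
def restrictMatching {G : SimpleGraph V} (N : G.Subgraph) (S : Set V) : (G.induce S).Subgraph where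
  verts := {v | ∃ w : S, N.Adj v w}
  Adj v w := N.Adj v w
  adj_sub h := N.adj_sub h
  edge_vert h := ⟨_, h⟩
  symm := ⟨fun _ _ h => N.symm.symm _ _ h⟩

lemma isMatching_restrictMatching {G : SimpleGraph V} {N : G.Subgraph} (hN : N.IsMatching)
    (S : Set V) : (restrictMatching N S).IsMatching := by
  rintro v ⟨w, hvw⟩
  exact ⟨w, hvw, fun x hvx => Subtype.ext (hN.eq_of_adj_left hvx hvw)⟩

lemma isPerfectMatching_restrictMatching_verts {G : SimpleGraph V} {N : G.Subgraph}
    (hN : N.IsMatching) : (restrictMatching N N.verts).IsPerfectMatching := by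
  refine ⟨isMatching_restrictMatching hN _, fun v => ?_⟩
  obtain ⟨w, hvw, -⟩ := hN v.2
  exact ⟨⟨w, hvw.snd_mem⟩, hvw⟩

lemma ncard_edgeSet_le_ncard_edgeSet_restrictMatching_add_one [Finite V] {G : SimpleGraph V}
    {N : G.Subgraph} (hN : N.IsMatching) (u : V) :
    N.edgeSet.ncard ≤ (restrictMatching N {u}ᶜ).edgeSet.ncard + 1 := by
  have hcover : N.edgeSet ⊆
      Sym2.map Subtype.val '' (restrictMatching N {u}ᶜ).edgeSet ∪ {e ∈ N.edgeSet | u ∈ e} := by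
    intro e he
    by_cases hu : u ∈ e
    · exact Or.inr ⟨he, hu⟩
    · induction e with
      | _ v w =>
        simp only [Sym2.mem_iff, not_or] at hu
        exact Or.inl ⟨s(⟨v, Ne.symm hu.1⟩, ⟨w, Ne.symm hu.2⟩), he, rfl⟩
  have hat_u : {e ∈ N.edgeSet | u ∈ e}.ncard ≤ 1 := by
    rw [Set.ncard_le_one_iff]
    rintro _ _ ⟨he, v, rfl⟩ ⟨he', w, rfl⟩
    exact congrArg (s(u, ·)) (hN.eq_of_adj_left he he')
  calc N.edgeSet.ncard
      ≤ (Sym2.map Subtype.val '' (restrictMatching N {u}ᶜ).edgeSet).ncard +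
          {e ∈ N.edgeSet | u ∈ e}.ncard :=
        (Set.ncard_le_ncard hcover (Set.toFinite _)).trans (Set.ncard_union_le _ _)
    _ ≤ (restrictMatching N {u}ᶜ).edgeSet.ncard + 1 :=
        add_le_add (Set.ncard_image_le (Set.toFinite _)) hat_u

theorem matchingNumber_le_matchingNumber_induce_compl_singleton_add_one [Finite V]
    (G : SimpleGraph V) (u : V) :
    matchingNumber G ≤ matchingNumber (G.induce {u}ᶜ) + 1 := by
  obtain ⟨N, hN, hcard⟩ := exists_isMatching_ncard_edgeSet_eq_matchingNumber G
  have hdeleted := ncard_edgeSet_le_matchingNumber (isMatching_restrictMatching hN {u}ᶜ)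
  have hloss := ncard_edgeSet_le_ncard_edgeSet_restrictMatching_add_one hN u
  omega

end Matchings

section EvenCycles

open SimpleGraph Subgraph
open scoped symmDiff

variable {W : Type*} {G : SimpleGraph V} {G' : SimpleGraph W} {f : G →g G'}

lemma ncard_verts_map (hf : Function.Injective f) (C : G.Subgraph) :
    (C.map f).verts.ncard = C.verts.ncard :=
  Set.ncard_image_of_injective _ hf

lemma map_subgraph_injective (hf : Function.Injective f) :
    Function.Injective (Subgraph.map f) := by
  refine Function.LeftInverse.injective (g := Subgraph.comap f) fun C => ?_
  ext v w
  · simp [hf.mem_set_image]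
  · simpa [Relation.map_apply_apply hf hf] using fun h => C.adj_sub h

lemma isCycleSubgraph_map (hf : Function.Injective f) {C : G.Subgraph}
    (hC : IsCycleSubgraph C) : IsCycleSubgraph (C.map f) := by
  refine ⟨Subgraph.connected_iff'.2 ?_, ?_⟩
  · let φ : C.coe →g (C.map f).coe :=
      ⟨fun v => ⟨f v, v, v.2, rfl⟩, fun {v w} h => ⟨v, w, h, rfl, rfl⟩⟩
    refine hC.1.coe.map φ ?_
    rintro ⟨_, v, hv, rfl⟩
    exact ⟨⟨v, hv⟩, rfl⟩
  · rintro _ ⟨v, hv, rfl⟩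
    have hnbrs : {w | (C.map f).Adj (f v) w} = f '' {w | C.Adj v w} := by
      ext x
      simp [Relation.Map, hf.eq_iff]
    rw [hnbrs, Set.ncard_image_of_injective _ hf, hC.2 v hv]

lemma onEvenCycle_map (hf : Function.Injective f) {v : V} (hv : OnEvenCycle G v) :
    OnEvenCycle G' (f v) := by
  obtain ⟨C, hC, heven, hvC⟩ := hv
  exact ⟨C.map f, isCycleSubgraph_map hf hC, by rwa [ncard_verts_map hf], v, hvC, rfl⟩

theorem evenCycleCount_induce_lt [Finite V] {u : V} (hu : OnEvenCycle G u) {S : Set V}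
    (huS : u ∉ S) : evenCycleCount (G.induce S) < evenCycleCount G := by
  let ι := (Embedding.induce (G := G) S).toHom
  have hι : Function.Injective ι := Subtype.val_injective
  obtain ⟨C, hC, heven, huC⟩ := hu
  rw [evenCycleCount, ← Set.ncard_image_of_injective _ (map_subgraph_injective hι)]
  refine Set.ncard_lt_ncard (Set.ssubset_iff_exists.2 ⟨?_, C, ⟨hC, heven⟩, ?_⟩)
  · rintro _ ⟨D, ⟨hD, hDeven⟩, rfl⟩
    exact ⟨isCycleSubgraph_map hι hD, by rwa [ncard_verts_map hι]⟩
  · rintro ⟨D, -, rfl⟩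
    obtain ⟨w, -, rfl⟩ := huC
    exact huS w.2

lemma neighborSet_nonempty_of_mem_supp {v w x : V} (hvw : G.Adj v w)
    (hx : x ∈ (G.connectedComponentMk v).supp) : (G.neighborSet x).Nonempty := by
  obtain ⟨p⟩ := ConnectedComponent.exact hx
  cases p with
  | nil => exact ⟨w, hvw⟩
  | cons hxy _ => exact ⟨_, hxy⟩

lemma isCycleSubgraph_toSubgraph_of_isCycles (hG : G.IsCycles) {v w : V} (hvw : G.Adj v w) :
    IsCycleSubgraph (G.connectedComponentMk v).toSubgraph := by
  refine ⟨ConnectedComponent.connected_toSubgraph _, fun x hx => ?_⟩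
  rw [← hG (neighborSet_nonempty_of_mem_supp hvw hx)]
  congr 1
  ext y
  refine ⟨fun hxy => hxy.2.2, fun hxy => ⟨hx, ?_, hxy⟩⟩
  exact (ConnectedComponent.mem_supp_congr_adj _ hxy).1 hx

variable {M N : G.Subgraph}

lemma symmDiff_spanningCoe_adj_of_adj (hM : M.IsMatching) (hN : N.IsMatching) {x y : V}
    (hxy : M.Adj x y) (hx : ((M.spanningCoe ∆ N.spanningCoe).neighborSet x).Nonempty) :
    (M.spanningCoe ∆ N.spanningCoe).Adj x y := by
  refine Or.inl ⟨hxy, fun hNxy => ?_⟩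
  obtain ⟨z, ⟨hMxz, hNxz⟩ | ⟨hNxz, hMxz⟩⟩ := hx
  · exact hNxz (hM.eq_of_adj_left hxy hMxz ▸ hNxy)
  · exact hMxz (hN.eq_of_adj_left hNxy hNxz ▸ hxy)

lemma even_ncard_supp_symmDiff [Finite V] (hM : M.IsPerfectMatching) (hN : N.IsPerfectMatching)
    {v w : V} (hvw : (M.spanningCoe ∆ N.spanningCoe).Adj v w) :
    Even ((M.spanningCoe ∆ N.spanningCoe).connectedComponentMk v).supp.ncard := by
  set c := (M.spanningCoe ∆ N.spanningCoe).connectedComponentMk v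
  have hmatch : (M.induce c.supp).IsMatching := by
    intro x hx
    obtain ⟨y, hxy, huniq⟩ := hM.1 (hM.2 x)
    have hadj := symmDiff_spanningCoe_adj_of_adj hM.1 hN.1 hxy
      (neighborSet_nonempty_of_mem_supp hvw hx)
    exact ⟨y, ⟨hx, (c.mem_supp_congr_adj hadj).1 hx, hxy⟩, fun z hz => huniq z hz.2.2⟩
  exact ncard_verts_of_isMatching hmatch ▸ even_two_mul _

theorem exists_onEvenCycle_of_isPerfectMatching_ne [Finite V] (hM : M.IsPerfectMatching)
    (hN : N.IsPerfectMatching) (hne : M ≠ N) : ∃ v, OnEvenCycle G v := by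
  let H := M.spanningCoe ∆ N.spanningCoe
  have hHG : H ≤ G := (symmDiff_le_sup (α := SimpleGraph V)).trans
    (sup_le M.spanningCoe_le N.spanningCoe_le)
  have hH : H ≠ ⊥ := by
    intro h
    have hadj : M.spanningCoe = N.spanningCoe := symmDiff_eq_bot.1 h
    refine hne (Subgraph.ext (hM.2.verts_eq_univ.trans hN.2.verts_eq_univ.symm) ?_)
    exact congrArg SimpleGraph.Adj hadj
  obtain ⟨v, w, hvw⟩ := ne_bot_iff_exists_adj.1 hH
  have hcycle : OnEvenCycle H v :=
    ⟨(H.connectedComponentMk v).toSubgraph,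
      isCycleSubgraph_toSubgraph_of_isCycles (hM.symmDiff_isCycles hN) hvw,
      even_ncard_supp_symmDiff hM hN hvw, rfl⟩
  exact ⟨v, onEvenCycle_map (f := Hom.ofLE hHG) Function.injective_id hcycle⟩

end EvenCycles

section Determinant

open SimpleGraph Subgraph

theorem det_eq_sum_inv_eq_self [Fintype V] [DecidableEq V] {R : Type*} [CommRing R] [CharP R 2]
    {A : Matrix V V R} (hA : A.IsSymm) :
    A.det = ∑ σ : Equiv.Perm V with σ⁻¹ = σ, ∏ i, A (σ i) i := by
  have hsign (σ : Equiv.Perm V) : ((Equiv.Perm.sign σ : ℤ) : R) = 1 := by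
    rcases Int.units_eq_one_or (Equiv.Perm.sign σ) with h | h <;> simp [h, CharTwo.neg_eq]
  have hinv (σ : Equiv.Perm V) : ∏ i, A (σ⁻¹ i) i = ∏ i, A (σ i) i := by
    rw [← Equiv.prod_comp σ]
    simp [hA.apply]
  have hcancel : ∑ σ : Equiv.Perm V with ¬σ⁻¹ = σ, ∏ i, A (σ i) i = 0 := by
    refine Finset.sum_involution (fun σ _ => σ⁻¹) (fun σ _ => ?_)
      (fun σ hσ _ => (Finset.mem_filter.1 hσ).2) (fun σ hσ => ?_) (fun σ _ => inv_inv σ)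
    · rw [hinv, CharTwo.add_self_eq_zero]
    · simpa [eq_comm] using hσ
  rw [Matrix.det_apply', ← Finset.sum_filter_add_sum_filter_not _
    (fun σ : Equiv.Perm V => σ⁻¹ = σ)]
  simp only [hsign, one_mul, hcancel, add_zero]

variable {G : SimpleGraph V}

/-- The perfect matching whose edges are the pairs exchanged by an involution moving every vertex
to a neighbour. -/
def matchingOfInvolution (σ : Equiv.Perm V) (hσ : σ⁻¹ = σ)
    (hadj : ∀ v, G.Adj (σ v) v) : G.Subgraph where
  verts := Set.univ
  Adj v w := σ v = w
  adj_sub := by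
    rintro v _ rfl
    exact (hadj v).symm
  edge_vert _ := Set.mem_univ _
  symm := ⟨by
    rintro v _ rfl
    exact (DFunLike.congr_fun hσ (σ v)).symm.trans (σ.symm_apply_apply v)⟩

lemma isPerfectMatching_matchingOfInvolution {σ : Equiv.Perm V} (hσ : σ⁻¹ = σ)
    (hadj : ∀ v, G.Adj (σ v) v) : (matchingOfInvolution σ hσ hadj).IsPerfectMatching :=
  isPerfectMatching_iff.2 fun v => ⟨σ v, rfl, fun _ h => Eq.symm h⟩

lemma exists_matchingOfInvolution_eq {N : G.Subgraph} (hN : N.IsPerfectMatching) :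
    ∃ (σ : Equiv.Perm V) (hσ : σ⁻¹ = σ) (hadj : ∀ v, G.Adj (σ v) v),
      matchingOfInvolution σ hσ hadj = N := by
  choose p hp using fun v => (hN.1 (hN.2 v)).exists
  have hinv : Function.Involutive p := fun v => hN.1.eq_of_adj_left (hp (p v)) (hp v).symm
  refine ⟨hinv.toPerm, hinv.toPerm_symm, fun v => (N.adj_sub (hp v)).symm, ?_⟩
  refine Subgraph.ext hN.2.verts_eq_univ.symm ?_
  ext v w
  refine ⟨?_, hN.1.eq_of_adj_left (hp v)⟩
  rintro rfl
  exact hp v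

theorem det_adjMatrix_eq_ncard_isPerfectMatching [Fintype V] [DecidableEq V] (G : SimpleGraph V)
    (R : Type*) [CommRing R] [CharP R 2] :
    (G.adjMatrix R).det = {N : G.Subgraph | N.IsPerfectMatching}.ncard := by
  have hcard : {σ : Equiv.Perm V | σ⁻¹ = σ ∧ ∀ v, G.Adj (σ v) v}.ncard =
      {N : G.Subgraph | N.IsPerfectMatching}.ncard := by
    refine Set.ncard_congr (fun σ hσ => matchingOfInvolution σ hσ.1 hσ.2)
      (fun σ hσ => isPerfectMatching_matchingOfInvolution hσ.1 hσ.2) ?_ ?_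
    · intro σ τ hσ hτ h
      ext v
      have hadj : (matchingOfInvolution τ hτ.1 hτ.2).Adj v (σ v) := h ▸ rfl
      exact Eq.symm hadj
    · intro N hN
      obtain ⟨σ, hσ, hadj, rfl⟩ := exists_matchingOfInvolution_eq hN
      exact ⟨σ, ⟨hσ, hadj⟩, rfl⟩
  rw [det_eq_sum_inv_eq_self G.isSymm_adjMatrix, ← hcard]
  simp only [adjMatrix_apply, Fintype.prod_boole, Finset.sum_boole, Finset.filter_filter]
  rw [← Set.ncard_coe_finset]
  simp

namespace MixedGraph

/-- The Hermitian adjacency matrix with its entries regarded as Gaussian integers. -/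
noncomputable def gaussianMatrix (M : MixedGraph V) : Matrix V V GaussianInt := fun u v =>
  if M.arc u v then ⟨0, 1⟩
  else if M.arc v u then ⟨0, -1⟩
  else if M.graph.Adj u v then 1 else 0

/-- Reduction of Gaussian integers modulo the prime `1 + i`, with residue field `ZMod 2`; it sends
`i` to `1`. -/
def gaussianResidue : GaussianInt →+* ZMod 2 := Zsqrtd.lift ⟨1, by decide⟩

variable [Fintype V] [DecidableEq V]

lemma map_toComplex_gaussianMatrix (M : MixedGraph V) :
    GaussianInt.toComplex.mapMatrix M.gaussianMatrix = M.hMatrix := by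
  ext u v
  simp only [RingHom.mapMatrix_apply, Matrix.map_apply, gaussianMatrix, hMatrix]
  split_ifs <;> simp [GaussianInt.toComplex_def]

lemma map_gaussianResidue_gaussianMatrix (M : MixedGraph V) :
    gaussianResidue.mapMatrix M.gaussianMatrix = M.graph.adjMatrix (ZMod 2) := by
  ext u v
  simp only [RingHom.mapMatrix_apply, Matrix.map_apply, gaussianMatrix, adjMatrix_apply]
  by_cases huv : M.arc u v
  · simp [huv, M.arc_adj u v huv, gaussianResidue]
  by_cases hvu : M.arc v u
  · simp [huv, hvu, (M.arc_adj v u hvu).symm, gaussianResidue]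
  · simp [huv, hvu, apply_ite]

theorem det_hMatrix_ne_zero (M : MixedGraph V) (hM : ∀ v, ¬OnEvenCycle M.graph v)
    {N : M.graph.Subgraph} (hN : N.IsPerfectMatching) : M.hMatrix.det ≠ 0 := by
  have hunique : {N : M.graph.Subgraph | N.IsPerfectMatching} = {N} := by
    refine Set.eq_singleton_iff_unique_mem.2 ⟨hN, fun N' hN' => ?_⟩
    by_contra hne
    obtain ⟨v, hv⟩ := exists_onEvenCycle_of_isPerfectMatching_ne hN' hN hne
    exact hM v hv
  have hmod : gaussianResidue M.gaussianMatrix.det = 1 := by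
    rw [RingHom.map_det, map_gaussianResidue_gaussianMatrix,
      det_adjMatrix_eq_ncard_isPerfectMatching, hunique, Set.ncard_singleton, Nat.cast_one]
  rw [← map_toComplex_gaussianMatrix, ← RingHom.map_det, Ne, GaussianInt.toComplex_eq_zero]
  intro hzero
  simp [hzero] at hmod

end MixedGraph

end Determinant

namespace MixedGraph

variable [Fintype V] [DecidableEq V]

lemma hRank_induce_le (M : MixedGraph V) (S : Set V) [Fintype S] [DecidableEq S] :
    (M.induce S).hRank ≤ M.hRank :=
  Matrix.rank_submatrix_le M.hMatrix Subtype.val Subtype.val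

lemma ncard_verts_le_hRank (M : MixedGraph V) (hM : ∀ v, ¬OnEvenCycle M.graph v)
    {N : M.graph.Subgraph} (hN : N.IsMatching) : N.verts.ncard ≤ M.hRank := by
  have hdet : (M.induce N.verts).hMatrix.det ≠ 0 :=
    det_hMatrix_ne_zero _
      (fun v hv => hM v (onEvenCycle_map (f := (SimpleGraph.Embedding.induce N.verts).toHom)
        Subtype.val_injective hv))
      (isPerfectMatching_restrictMatching_verts hN)
  calc N.verts.ncard = Fintype.card N.verts := by
        rw [← Nat.card_coe_set_eq, Nat.card_eq_fintype_card]
    _ = (M.induce N.verts).hRank :=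
        (Matrix.rank_of_isUnit _ ((Matrix.isUnit_iff_isUnit_det _).2 hdet.isUnit)).symm
    _ ≤ M.hRank := M.hRank_induce_le N.verts

end MixedGraph

theorem two_mul_matchingNumber_le_hRank_add_two_mul_evenCycleCount
    {V : Type u} [Fintype V] [DecidableEq V] (M : MixedGraph V) :
    2 * matchingNumber M.graph ≤ M.hRank + 2 * evenCycleCount M.graph := by
  by_cases hcycle : ∃ u, OnEvenCycle M.graph u
  · obtain ⟨u, hu⟩ := hcycle
    have hbound : 2 * matchingNumber (M.graph.induce {u}ᶜ) ≤
        (M.induce {u}ᶜ).hRank + 2 * evenCycleCount (M.graph.induce {u}ᶜ) :=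
      two_mul_matchingNumber_le_hRank_add_two_mul_evenCycleCount (M.induce {u}ᶜ)
    have hrank := M.hRank_induce_le {u}ᶜ
    have hmatching := matchingNumber_le_matchingNumber_induce_compl_singleton_add_one M.graph u
    have hcount := evenCycleCount_induce_lt hu (S := {u}ᶜ) (by simp)
    omega
  · obtain ⟨N, hN, hcard⟩ := exists_isMatching_ncard_edgeSet_eq_matchingNumber M.graph
    have hverts := M.ncard_verts_le_hRank (not_exists.1 hcycle) hN
    rw [ncard_verts_of_isMatching hN, hcard] at hverts
    exact hverts.trans (Nat.le_add_right _ _)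
termination_by Fintype.card V
decreasing_by exact Fintype.card_subtype_lt (x := u) (by simp)

theorem vertex_deletion_of_hRank_eq_lower_bound_add_one_general
    {V : Type u} [Fintype V] [DecidableEq V] (M : MixedGraph V)
    (hr : (M.hRank : ℤ) ≤
      2 * (matchingNumber M.graph : ℤ) - 2 * (evenCycleCount M.graph : ℤ) + 1) :
    ∀ u : V, OnEvenCycle M.graph u →
      (evenCycleCount (M.induce {u}ᶜ).graph : ℤ) = (evenCycleCount M.graph : ℤ) - 1 ∧
      (matchingNumber (M.induce {u}ᶜ).graph : ℤ) = (matchingNumber M.graph : ℤ) - 1 ∧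
      ∃ a : ℤ, (a = 0 ∨ a = 1) ∧
        ((M.induce {u}ᶜ).hRank : ℤ) =
          2 * (matchingNumber (M.induce {u}ᶜ).graph : ℤ) -
            2 * (evenCycleCount (M.induce {u}ᶜ).graph : ℤ) + a := by
  intro u hu
  have hbound := two_mul_matchingNumber_le_hRank_add_two_mul_evenCycleCount (M.induce {u}ᶜ)
  have hrank := M.hRank_induce_le {u}ᶜ
  have hmatching : matchingNumber M.graph ≤ matchingNumber (M.induce {u}ᶜ).graph + 1 :=
    matchingNumber_le_matchingNumber_induce_compl_singleton_add_one M.graph u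
  have hcount : evenCycleCount (M.induce {u}ᶜ).graph < evenCycleCount M.graph :=
    evenCycleCount_induce_lt hu (S := {u}ᶜ) (by simp)
  refine ⟨by omega, by omega, _, ?_, (add_sub_cancel _ _).symm⟩
  omega

/-- If 0 ≤ κ(G) ≤ c(G) and r(G̃) = 2m(G) − 2κ(G) + 1, then for
every vertex u on an even cycle of G: κ(G−u) = κ(G) − 1, m(G−u) = m(G) − 1, and
r(G̃−u) = 2m(G−u) − 2κ(G−u) + a_u with a_u ∈ {0,1}. -/
theorem vertex_deletion_of_hRank_eq_lower_bound_add_one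
    {V : Type u} [Fintype V] [DecidableEq V] (M : MixedGraph V)
    (hκc : (evenCycleCount M.graph : ℤ) ≤ cyclomatic M.graph)
    (hr : (M.hRank : ℤ) =
      2 * (matchingNumber M.graph : ℤ) - 2 * (evenCycleCount M.graph : ℤ) + 1) :
    ∀ u : V, OnEvenCycle M.graph u →
      (evenCycleCount (M.induce {u}ᶜ).graph : ℤ) = (evenCycleCount M.graph : ℤ) - 1 ∧
      (matchingNumber (M.induce {u}ᶜ).graph : ℤ) = (matchingNumber M.graph : ℤ) - 1 ∧
      ∃ a : ℤ, (a = 0 ∨ a = 1) ∧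
        ((M.induce {u}ᶜ).hRank : ℤ) =
          2 * (matchingNumber (M.induce {u}ᶜ).graph : ℤ) -
            2 * (evenCycleCount (M.induce {u}ᶜ).graph : ℤ) + a :=
  vertex_deletion_of_hRank_eq_lower_bound_add_one_general M hr.le

end MixedPaper
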